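/- Let G = (V ∪ {s}, E) be a finite sandpile graph, let W ⊆ V be nonempty with the induced subgraph of G on (V ∪ {s}) \ W connected, and let ξ be a minimal configuration on W. Then for every η ∈ R_G with η_W = ξ, we have η ∈ E_{V,W}: the first phase of burning based on W burns all of V \ W, i.e., U^{(1)}_I = W. -/

import Mathlib

open scoped Classical

namespace Sandpile

/-- A finite sandpile multigraph on vertex set `α` (which plays the role of `V ∪ {s}`),
given by a distinguished sink and symmetric edge multiplicities. -/
structure Graph (α : Type*) where
  sink : α
  b : α → α → ℕ

namespace Graph

variable {α : Type*} [Fintype α] [DecidableEq α] (G : Graph α)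

/-- The non-sink vertices (the set `V`). -/
def VSet : Finset α := Finset.univ.erase G.sink

/-- Degree restricted to a finite set of vertices: `deg_F(x) = ∑_{y ∈ F} b_{xy}`. -/
def degIn (F : Finset α) (x : α) : ℕ := ∑ y ∈ F, G.b x y

/-- Total degree `deg_G(x)`. -/
def deg (x : α) : ℕ := ∑ y, G.b x y

/-- `G` is a genuine finite sandpile graph: symmetric multiplicities, no loops, connected. -/
def IsSandpileGraph : Prop :=
  (∀ x y, G.b x y = G.b y x) ∧ (∀ x, G.b x x = 0) ∧
    ∀ x y : α, Relation.ReflTransGen (fun u v => 0 < G.b u v) x y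

/-- Connectivity of the subgraph induced on the vertex set `S`. -/
def ConnectedOn (S : Set α) : Prop :=
  ∀ x ∈ S, ∀ y ∈ S,
    Relation.ReflTransGen (fun u v => u ∈ S ∧ v ∈ S ∧ 0 < G.b u v) x y

/-- A sandpile is stable if every non-sink vertex carries fewer particles than its degree. -/
def Stable (η : α → ℕ) : Prop := ∀ x ∈ G.VSet, η x < G.deg x

/-- `η` is ample for `F` if some vertex of `F` has at least `deg_F` particles. -/
def AmpleFor (η : α → ℕ) (F : Finset α) : Prop := ∃ x ∈ F, G.degIn F x ≤ η x

/-- Dhar's burning test: recurrent = stable and ample for every nonempty `F ⊆ V`. -/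
def Recurrent (η : α → ℕ) : Prop :=
  G.Stable η ∧ ∀ F ⊆ G.VSet, F.Nonempty → G.AmpleFor η F

/-- Remove one particle at `w` (`η - δ_w`). -/
def SubOne (η : α → ℕ) (w : α) : α → ℕ := fun x => if x = w then η x - 1 else η x

/-- `η` and `ξ` agree on `W` (restriction `η_W = ξ_W`). -/
def EqOn (η ξ : α → ℕ) (W : Finset α) : Prop := ∀ x ∈ W, η x = ξ x

/-- `ξ` is (generalized) minimal on `W`: it extends to a recurrent sandpile, and no
recurrent extension stays recurrent after removing a particle from a vertex of `W`.
(`η - δ_w ∉ R_G` holds automatically if `η w = 0`, as then `η - δ_w` is not a configuration.) -/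
def Minimal (W : Finset α) (ξ : α → ℕ) : Prop :=
  (∃ η, G.Recurrent η ∧ EqOn η ξ W) ∧
    ∀ η, G.Recurrent η → EqOn η ξ W → ∀ w ∈ W, ¬(1 ≤ η w ∧ G.Recurrent (SubOne η w))

/-- `ν_G[P]`: the uniform probability of the event `P` under the uniform measure on
recurrent configurations (configurations are normalized to vanish at the sink). -/
noncomputable def prob (P : (α → ℕ) → Prop) : ℝ :=
  (Nat.card {η : α → ℕ // η G.sink = 0 ∧ G.Recurrent η ∧ P η} : ℝ) /
    (Nat.card {η : α → ℕ // η G.sink = 0 ∧ G.Recurrent η} : ℝ)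

/-- The graph Laplacian with the sink row and column deleted. -/
noncomputable def lapRed :
    Matrix {x : α // x ≠ G.sink} {x : α // x ≠ G.sink} ℝ :=
  Matrix.of fun x y =>
    if (x : α) = (y : α) then (G.deg ↑x : ℝ) else -(G.b ↑x ↑y : ℝ)

/-- `H = (Δ')⁻¹`, extended by `0` on the sink. -/
noncomputable def Hfun (x y : α) : ℝ :=
  if hx : x = G.sink then 0
  else if hy : y = G.sink then 0
  else (G.lapRed)⁻¹ ⟨x, hx⟩ ⟨y, hy⟩

/-- Oriented edges of the multigraph `G`: an edge from `p.1` to `p.2.1`, with copy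
index `p.2.2` (parallel edges are distinct). -/
abbrev OEdge (G : Graph α) : Type _ := {p : α × α × ℕ // p.2.2 < G.b p.1 p.2.1}

/-- `K_G(e,f) = δ_{ef} - Y_G(e,f)` where `Y_G` is the transfer current matrix. -/
noncomputable def Kmat (e f : G.OEdge) : ℝ :=
  (if e = f then 1 else 0) -
    (G.Hfun e.1.1 f.1.1 - G.Hfun e.1.1 f.1.2.1 - G.Hfun e.1.2.1 f.1.1 +
      G.Hfun e.1.2.1 f.1.2.1)

/-- Unburnt sets of phase one of the burning algorithm based on `Q`:
`U_0 = V`, `U_i = U_{i-1} \ B_i` with `B_i = {x ∈ U_{i-1} \ Q : η x ≥ deg_{U_{i-1}} x}`. -/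
def U1 (η : α → ℕ) (Q : Finset α) : ℕ → Finset α
  | 0 => G.VSet
  | i + 1 => (U1 η Q i).filter fun x => x ∈ Q ∨ η x < G.degIn (U1 η Q i) x

/-- The final unburnt set `U^{(1)}_I` of phase one (the sequence `U1` is decreasing,
hence stabilizes after at most `|α|` steps). -/
def U1lim (η : α → ℕ) (Q : Finset α) : Finset α := G.U1 η Q (Fintype.card α)

/-- Unburnt sets of phase two of the burning algorithm based on `Q`. -/
def U2 (η : α → ℕ) (Q : Finset α) : ℕ → Finset α
  | 0 => G.U1lim η Q
  | i + 1 => (U2 η Q i).filter fun x => η x < G.degIn (U2 η Q i) x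

/-- Recurrence in the wired graph `G_W` (note `deg_{G_W}(x) = deg_G(x)` for `x ∈ W`,
and `deg_F` for `F ⊆ W` is the same in `G_W` and `G`). -/
def WiredRecurrent (W : Finset α) (ξ : α → ℕ) : Prop :=
  (∀ x ∈ W, ξ x < G.deg x) ∧ ∀ F ⊆ W, F.Nonempty → ∃ x ∈ F, G.degIn F x ≤ ξ x

/-- `ξ` is minimal in the wired graph `G_W`. -/
def WiredMinimal (W : Finset α) (ξ : α → ℕ) : Prop :=
  G.WiredRecurrent W ξ ∧ ∀ w ∈ W, ¬(1 ≤ ξ w ∧ G.WiredRecurrent W (SubOne ξ w))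

/-- Entry points `E(ξ,W)` of `ξ ∈ R_{G_W}`: vertices burnable at the first step. -/
def entryPoints (W : Finset α) (ξ : α → ℕ) : Finset α :=
  W.filter fun w => G.degIn W w ≤ ξ w

/-- `x` is burnable given the burnt set `S`: `η(x) ≥ deg_G(x) − ∑_{y ∈ S} b_{xy}`. -/
def Burnable (η : α → ℕ) (S : Finset α) (x : α) : Prop :=
  G.degIn (Finset.univ \ S) x ≤ η x

/-- A burning sequence starting from the burnt set `S`. -/
def IsBurnSeq (η : α → ℕ) : Finset α → List α → Prop
  | _, [] => True
  | S, x :: l => x ∉ S ∧ G.Burnable η S x ∧ IsBurnSeq η (insert x S) l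

/-- `B` is a burnt set for `η`: some burning sequence from `{s}` burns exactly `B`. -/
def IsBurntSet (η : α → ℕ) (B : Finset α) : Prop :=
  ∃ l : List α, G.IsBurnSeq η {G.sink} l ∧ l.toFinset = B

/-- Reachability within the vertex set `S`. -/
def ReachIn (S : Set α) (x y : α) : Prop :=
  Relation.ReflTransGen (fun u v => u ∈ S ∧ v ∈ S ∧ 0 < G.b u v) x y

/-- `C` is a connected component of the subgraph induced on `(V ∪ {s}) \ W`
that does not contain the sink. -/
def IsHoleComp (W C : Finset α) : Prop :=
  C.Nonempty ∧ G.sink ∉ C ∧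
    ∀ x ∈ C, ∀ y : α, y ∈ C ↔ y ∉ W ∧ G.ReachIn {a : α | a ∉ W} x y

/-- Adjacency induced by a finite set `t` of (undirected, indexed) edges. -/
def edgeRel (t : Finset (Sym2 α × ℕ)) (u v : α) : Prop := ∃ k : ℕ, (s(u, v), k) ∈ t

/-- `t` is a spanning tree of the multigraph `G`: it consists of edges of `G`
(parallel edges distinct), it spans (connected), and every edge is a bridge
(equivalently, it is acyclic). -/
def IsSpanningTree (t : Finset (Sym2 α × ℕ)) : Prop :=
  (∀ p ∈ t, ∃ x y : α, p.1 = s(x, y) ∧ p.2 < G.b x y) ∧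
  (∀ u v : α, Relation.ReflTransGen (edgeRel t) u v) ∧
  ∀ p ∈ t, ∀ x y : α, p.1 = s(x, y) →
    ¬ Relation.ReflTransGen (edgeRel (t.erase p)) x y

/-- Adjacency induced by a set of (undirected, indexed) edges. -/
def edgeRelSet (t : Set (Sym2 α × ℕ)) (u v : α) : Prop := ∃ k : ℕ, (s(u, v), k) ∈ t

/-- Set version of `IsSpanningTree`. -/
def IsSpanningTreeSet (t : Set (Sym2 α × ℕ)) : Prop :=
  (∀ p ∈ t, ∃ x y : α, p.1 = s(x, y) ∧ p.2 < G.b x y) ∧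
  (∀ u v : α, Relation.ReflTransGen (edgeRelSet t) u v) ∧
  ∀ p ∈ t, ∀ x y : α, p.1 = s(x, y) →
    ¬ Relation.ReflTransGen (edgeRelSet (t \ {p})) x y

/-- The step at which `x` burns in phase one (0 for the sink; `sInf ∅ = 0` if `x`
never burns in phase one). -/
noncomputable def p1time (η : α → ℕ) (Q : Finset α) (x : α) : ℕ :=
  sInf {i : ℕ | x ∉ G.U1 η Q i}

/-- The step at which `x` burns in phase two. -/
noncomputable def p2time (η : α → ℕ) (Q : Finset α) (x : α) : ℕ :=
  sInf {i : ℕ | x ∉ G.U2 η Q i}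

/-- Vertices burnt at step `i` of phase one (`B^{(1)}_0 = {s}`). -/
def B1 (η : α → ℕ) (Q : Finset α) : ℕ → Finset α
  | 0 => {G.sink}
  | i + 1 => G.U1 η Q i \ G.U1 η Q (i + 1)

/-- Vertices burnt at step `i` of phase two (`B^{(2)}_0` = everything burnt in phase
one, including the sink). -/
def B2 (η : α → ℕ) (Q : Finset α) : ℕ → Finset α
  | 0 => Finset.univ \ G.U1lim η Q
  | i + 1 => G.U2 η Q i \ G.U2 η Q (i + 1)

/-- The set `B^{(p)}_{i-1}` of vertices burnt at the step preceding the step at which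
`x` burns (in the appropriate phase). -/
noncomputable def prevBurnt (η : α → ℕ) (Q : Finset α) (x : α) : Finset α :=
  if x ∈ G.U1lim η Q then G.B2 η Q (G.p2time η Q x - 1)
  else G.B1 η Q (G.p1time η Q x - 1)

/-- The set `D = B^{(p)}_0 ∪ ⋯ ∪ B^{(p)}_{i-1}` of vertices burnt strictly before `x`
in the phase in which `x` burns. -/
noncomputable def burntBefore (η : α → ℕ) (Q : Finset α) (x : α) : Finset α :=
  if x ∈ G.U1lim η Q then Finset.univ \ G.U2 η Q (G.p2time η Q x - 1)
  else Finset.univ \ G.U1 η Q (G.p1time η Q x - 1)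

/-- `j = η(x) − deg_G(x) + n_x` with `n_x = ∑_{y ∈ D} b_{xy}`. -/
noncomputable def jX (η : α → ℕ) (Q : Finset α) (x : α) : ℕ :=
  η x + G.degIn (G.burntBefore η Q x) x - G.deg x

/-- The defining property of the edge `e_x` of the burning bijection based on `Q`:
`e_x` has tail `x`, head burnt at the previous step, and exactly `j` smaller elements
of `P_x` under the given edge order `lt x`. -/
def EdgeSpec (lt : α → G.OEdge → G.OEdge → Prop) (η : α → ℕ) (Q : Finset α)
    (x : α) (e : G.OEdge) : Prop :=
  e.1.1 = x ∧ e.1.2.1 ∈ G.prevBurnt η Q x ∧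
    {f : G.OEdge | f.1.1 = x ∧ f.1.2.1 ∈ G.prevBurnt η Q x ∧ lt x f e}.ncard =
      G.jX η Q x

/-- The (oriented) spanning tree `t(η) = {e_x : x ∈ V}` assigned to `η` by the
burning bijection based on `Q`. -/
def treeOf (lt : α → G.OEdge → G.OEdge → Prop) (η : α → ℕ) (Q : Finset α) :
    Set G.OEdge :=
  {e | ∃ x ∈ G.VSet, G.EdgeSpec lt η Q x e}

/-- Forget the orientation of an oriented edge. -/
def undir (e : G.OEdge) : Sym2 α × ℕ := (s(e.1.1, e.1.2.1), e.1.2.2)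

/-- Total burning order: phase-one vertices first (at their phase-one step), then
phase-two vertices. -/
noncomputable def burnOrder (η : α → ℕ) (Q : Finset α) (x : α) : ℕ :=
  if x ∈ G.U1lim η Q then Fintype.card α + 1 + G.p2time η Q x else G.p1time η Q x

/-- Edge multiplicities of the auxiliary graph `G_W^*` (on vertex set `W ∪ {s}`):
`b*_{xy} = b_{xy}` for `x,y ∈ W`; `b*_{xs} = ∑_{z ∉ W} b_{xz}` for `x ∈ Q` and
`b*_{xs} = 0` for `x ∈ W \ Q`. -/
def bstar (Q W : Finset α) (x y : α) : ℕ :=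
  if x ∈ W ∧ y ∈ W then G.b x y
  else if x ∈ W ∧ y = G.sink then
    if x ∈ Q then ∑ z ∈ Finset.univ \ W, G.b x z else 0
  else if y ∈ W ∧ x = G.sink then
    if y ∈ Q then ∑ z ∈ Finset.univ \ W, G.b z y else 0
  else 0

/-- Recurrence in the auxiliary graph `G_W^*`. -/
def StarRecurrent (Q W : Finset α) (ζ : α → ℕ) : Prop :=
  (∀ x ∈ W, ζ x < ∑ y ∈ insert G.sink W, G.bstar Q W x y) ∧
    ∀ F ⊆ W, F.Nonempty → ∃ x ∈ F, (∑ y ∈ F, G.bstar Q W x y) ≤ ζ x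

end Graph

end Sandpile

open Sandpile

/-!
Suppose phase one of the burning based on `W` leaves a nonempty set `D ⊆ V \ W` unburnt, and run
the burning based on `D` instead. Recurrence makes its residue ample at some `x ∈ D`; as `x` was
stuck in the burning based on `W`, it has a neighbour `w ∈ W` that burns while `x` does not.
Hence `w` burns without the help of the edge to `x`. In the wired graph `G_W` the vertex `x` is
burnt from the start, so one particle at `w` is superfluous there: `ξ - δ_w` is recurrent in `G_W`.
Filling `V \ W` with maximal heights extends it to a recurrent configuration of `G`, because
`(V ∪ {s}) \ W` is connected, and this contradicts the minimality of `ξ`.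
-/

namespace Sandpile.Graph

section Degree

variable {α : Type*} (G : Graph α) {F F' : Finset α} {x y : α}

theorem degIn_mono (h : F ⊆ F') (x : α) : G.degIn F x ≤ G.degIn F' x :=
  Finset.sum_le_sum_of_subset h

theorem degIn_lt_degIn (h : F ⊆ F') (hy : y ∈ F') (hyF : y ∉ F) (hb : 0 < G.b x y) :
    G.degIn F x < G.degIn F' x :=
  Finset.sum_lt_sum_of_subset h hy hyF hb fun _ _ _ => Nat.zero_le _

theorem exists_b_pos_of_degIn_lt (h : G.degIn F x < G.degIn F' x) :
    ∃ y ∈ F', y ∉ F ∧ 0 < G.b x y := by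
  by_contra! hzero
  exact h.not_ge (Finset.sum_le_sum_of_ne_zero fun y hy hb =>
    by_contra fun hyF => hb (Nat.le_zero.1 (hzero y hy hyF)))

variable {G} in
theorem ConnectedOn.exists_degIn_lt_deg [Fintype α] {S : Set α} (hS : G.ConnectedOn S)
    (hx : x ∈ S) (hxF : x ∈ F) (hy : y ∈ S) (hyF : y ∉ F) :
    ∃ u ∈ F, u ∈ S ∧ G.degIn F u < G.deg u := by
  by_contra! hclosed
  have hpath := hS x hx y hy
  apply hyF
  clear hy hyF
  induction hpath with
  | refl => exact hxF
  | @tail u v _ huv hu =>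
    by_contra hv
    exact (hclosed u hu huv.1).not_gt
      (G.degIn_lt_degIn F.subset_univ (Finset.mem_univ v) hv huv.2.2)

end Degree

theorem subOne_eq_sub_single {α : Type*} [DecidableEq α] (η : α → ℕ) (w : α) :
    SubOne η w = η - Pi.single w 1 := by
  ext x
  by_cases hx : x = w <;> simp [SubOne, hx]

variable {α : Type*} [Fintype α] [DecidableEq α] {G : Graph α} {η ξ : α → ℕ} {Q W : Finset α}

theorem subset_VSet_iff : W ⊆ G.VSet ↔ G.sink ∉ W := by
  simp [VSet, Finset.subset_erase]

section PhaseOne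

variable (G η Q)

theorem mem_U1_succ {i : ℕ} {x : α} :
    x ∈ G.U1 η Q (i + 1) ↔ x ∈ G.U1 η Q i ∧ (x ∈ Q ∨ η x < G.degIn (G.U1 η Q i) x) := by
  rw [U1, Finset.mem_filter]

theorem U1_antitone : Antitone (G.U1 η Q) :=
  antitone_nat_of_succ_le fun _ _ hx => ((G.mem_U1_succ η Q).1 hx).1

theorem U1_eq_U1lim {n : ℕ} (hn : Fintype.card α ≤ n) : G.U1 η Q n = G.U1lim η Q := by
  have hcard : (G.U1 η Q n)ᶜ.card = (G.U1lim η Q)ᶜ.card := by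
    refine Nat.stabilises_of_monotone (f := fun m => (G.U1 η Q m)ᶜ.card)
      (fun _ _ h => Finset.card_le_card (Finset.compl_subset_compl.2 (G.U1_antitone η Q h)))
      (fun _ => Finset.card_le_univ _) (fun m hm => ?_) hn
    have hstep : G.U1 η Q m = G.U1 η Q (m + 1) := compl_injective <|
      Finset.eq_of_subset_of_card_le
        (Finset.compl_subset_compl.2 (G.U1_antitone η Q m.le_succ)) hm.ge
    have hnext : G.U1 η Q (m + 1) = G.U1 η Q (m + 2) := by
      ext x
      rw [mem_U1_succ, mem_U1_succ _ _ _ (i := m + 1), hstep]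
    exact congrArg (fun U => Uᶜ.card) hnext
  refine Finset.eq_of_subset_of_card_le (G.U1_antitone η Q hn) ?_
  rw [Finset.card_compl, Finset.card_compl] at hcard
  have := Finset.card_le_univ (G.U1 η Q n)
  have := Finset.card_le_univ (G.U1lim η Q)
  omega

theorem U1lim_subset_U1 (n : ℕ) : G.U1lim η Q ⊆ G.U1 η Q n := by
  rcases le_total n (Fintype.card α) with hn | hn
  · exact G.U1_antitone η Q hn
  · exact (G.U1_eq_U1lim η Q hn).ge

theorem U1lim_subset_VSet : G.U1lim η Q ⊆ G.VSet :=
  G.U1lim_subset_U1 η Q 0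

variable {G η Q}

theorem subset_U1lim (hQ : Q ⊆ G.VSet) : Q ⊆ G.U1lim η Q := by
  suffices h : ∀ n, Q ⊆ G.U1 η Q n from h _
  intro n
  induction n with
  | zero => exact hQ
  | succ n ih => exact fun x hx => (G.mem_U1_succ η Q).2 ⟨ih hx, Or.inl hx⟩

theorem lt_degIn_U1lim {x : α} (hx : x ∈ G.U1lim η Q) (hxQ : x ∉ Q) :
    η x < G.degIn (G.U1lim η Q) x := by
  rw [← G.U1_eq_U1lim η Q (Nat.le_succ _), mem_U1_succ] at hx
  exact hx.2.resolve_left hxQ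

/- The witness is a vertex of `T` that burns first; at that time `T` and the final residue are
both unburnt. -/
theorem exists_degIn_union_U1lim_le {T : Finset α} (hT : T ⊆ G.VSet) (h : ¬ T ⊆ G.U1lim η Q) :
    ∃ t ∈ T, t ∉ G.U1lim η Q ∧ G.degIn (T ∪ G.U1lim η Q) t ≤ η t := by
  obtain ⟨n, hn, hn'⟩ : ∃ n, ¬ ¬ T ⊆ G.U1 η Q n ∧ ¬ T ⊆ G.U1 η Q (n + 1) :=
    Nat.exists_not_and_succ_of_not_zero_of_exists (not_not.2 hT) ⟨_, h⟩
  have hTn : T ⊆ G.U1 η Q n := not_not.1 hn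
  obtain ⟨t, ht, htn⟩ := Finset.not_subset.1 hn'
  have hburn : G.degIn (G.U1 η Q n) t ≤ η t :=
    not_lt.1 fun hlt => htn ((G.mem_U1_succ η Q).2 ⟨hTn ht, Or.inr hlt⟩)
  exact ⟨t, ht, fun htU => htn (G.U1lim_subset_U1 η Q _ htU),
    (G.degIn_mono (Finset.union_subset hTn (G.U1lim_subset_U1 η Q n)) t).trans hburn⟩

end PhaseOne

section MaxExtension

variable (G) in
/-- The extension of a configuration on `W` to all of `G` by the maximal stable height
`deg_G x - 1` at every vertex outside `W`. The subtraction truncates at isolated vertices. -/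
def maxExtension (W : Finset α) (ξ : α → ℕ) (x : α) : ℕ := if x ∈ W then ξ x else G.deg x - 1

theorem maxExtension_eqOn : EqOn (G.maxExtension W ξ) ξ W := fun _ hx => if_pos hx

theorem maxExtension_of_notMem {x : α} (hx : x ∉ W) : G.maxExtension W ξ x = G.deg x - 1 :=
  if_neg hx

theorem maxExtension_subOne {w : α} (hw : w ∈ W) :
    G.maxExtension W (SubOne ξ w) = SubOne (G.maxExtension W ξ) w := by
  ext x
  by_cases hx : x = w <;> simp [maxExtension, SubOne, hx, hw]

theorem WiredRecurrent.recurrent_maxExtension (hξ : G.WiredRecurrent W ξ) (hWs : G.sink ∉ W)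
    (hconn : G.ConnectedOn {x : α | x ∉ W}) : G.Recurrent (G.maxExtension W ξ) := by
  constructor
  · intro x hxV
    by_cases hxW : x ∈ W
    · rw [maxExtension_eqOn x hxW]
      exact hξ.1 x hxW
    · obtain ⟨u, hu, -, hdeg⟩ := hconn.exists_degIn_lt_deg hxW (Finset.mem_singleton_self x) hWs
        (by simpa [VSet, eq_comm] using hxV)
      obtain rfl := Finset.mem_singleton.1 hu
      rw [maxExtension_of_notMem hxW]
      omega
  · intro F hF hne
    by_cases hFW : F ⊆ W
    · obtain ⟨x, hx, hdeg⟩ := hξ.2 F hFW hne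
      exact ⟨x, hx, hdeg.trans_eq (maxExtension_eqOn x (hFW hx)).symm⟩
    · obtain ⟨x, hxF, hxW⟩ := Finset.not_subset.1 hFW
      obtain ⟨u, huF, huW, hdeg⟩ :=
        hconn.exists_degIn_lt_deg hxW hxF hWs (subset_VSet_iff.1 hF)
      exact ⟨u, huF, (Nat.le_sub_one_of_lt hdeg).trans_eq (maxExtension_of_notMem huW).symm⟩

end MaxExtension

theorem Recurrent.wiredRecurrent (hη : G.Recurrent η) (hηξ : EqOn η ξ W) (hW : W ⊆ G.VSet) :
    G.WiredRecurrent W ξ := by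
  refine ⟨fun x hx => (hηξ x hx).symm.trans_lt (hη.1 x (hW hx)), fun F hF hne => ?_⟩
  obtain ⟨x, hx, hdeg⟩ := hη.2 F (hF.trans hW) hne
  exact ⟨x, hx, hdeg.trans_eq (hηξ x (hF hx))⟩

theorem Minimal.congr (hξ : G.Minimal W ξ) (hηξ : EqOn η ξ W) : G.Minimal W η := by
  obtain ⟨⟨ζ, hζ, hζξ⟩, hmin⟩ := hξ
  exact ⟨⟨ζ, hζ, fun x hx => (hζξ x hx).trans (hηξ x hx).symm⟩,
    fun ζ' hζ' hζη => hmin ζ' hζ' fun x hx => (hζη x hx).trans (hηξ x hx)⟩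

theorem Minimal.wiredMinimal (hξ : G.Minimal W ξ) (hWs : G.sink ∉ W)
    (hconn : G.ConnectedOn {x : α | x ∉ W}) : G.WiredMinimal W ξ := by
  obtain ⟨⟨η, hη, hηξ⟩, hmin⟩ := hξ
  have hwired := hη.wiredRecurrent hηξ (subset_VSet_iff.2 hWs)
  refine ⟨hwired, fun w hw ⟨hpos, hsub⟩ => ?_⟩
  refine hmin _ (hwired.recurrent_maxExtension hWs hconn) maxExtension_eqOn w hw ⟨?_, ?_⟩
  · rwa [maxExtension_eqOn w hw]
  · rw [← maxExtension_subOne hw]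
    exact hsub.recurrent_maxExtension hWs hconn

theorem Recurrent.exists_degIn_add_single_le (hη : G.Recurrent η) (hW : W ⊆ G.VSet) {w x : α}
    (hw : w ∉ G.U1lim η Q) (hxW : x ∉ W) (hx : x ∈ G.U1lim η Q) (hwx : 0 < G.b w x)
    {F : Finset α} (hF : F ⊆ W) (hne : F.Nonempty) :
    ∃ t ∈ F, G.degIn F t + (Pi.single w 1 : α → ℕ) t ≤ η t := by
  by_cases hwF : w ∈ F
  · obtain ⟨t, htF, -, hdeg⟩ :=
      exists_degIn_union_U1lim_le (hF.trans hW) fun hFU => hw (hFU hwF)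
    refine ⟨t, htF, le_trans ?_ hdeg⟩
    by_cases htw : t = w
    · subst htw
      rw [Pi.single_eq_same]
      exact G.degIn_lt_degIn Finset.subset_union_left (Finset.mem_union_right _ hx)
        (fun hxF => hxW (hF hxF)) hwx
    · rw [Pi.single_eq_of_ne htw, add_zero]
      exact G.degIn_mono Finset.subset_union_left t
  · obtain ⟨t, htF, hdeg⟩ := hη.2 F (hF.trans hW) hne
    have htw : t ≠ w := fun h => hwF (h ▸ htF)
    exact ⟨t, htF, by rwa [Pi.single_eq_of_ne htw, add_zero]⟩

theorem Recurrent.not_wiredMinimal (hη : G.Recurrent η) (hW : W ⊆ G.VSet) {w x : α}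
    (hwW : w ∈ W) (hw : w ∉ G.U1lim η Q) (hxW : x ∉ W) (hx : x ∈ G.U1lim η Q)
    (hwx : 0 < G.b w x) : ¬ G.WiredMinimal W η := by
  intro hmin
  have hsurplus {F : Finset α} := hη.exists_degIn_add_single_le (F := F) hW hw hxW hx hwx
  have hpos : 1 ≤ η w := by
    obtain ⟨t, ht, hdeg⟩ :=
      hsurplus (Finset.singleton_subset_iff.2 hwW) (Finset.singleton_nonempty w)
    obtain rfl := Finset.mem_singleton.1 ht
    rw [Pi.single_eq_same] at hdeg
    exact le_of_add_le_right hdeg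
  refine hmin.2 w hwW ⟨hpos, ?_⟩
  rw [subOne_eq_sub_single]
  refine ⟨fun x hx => (Nat.sub_le _ _).trans_lt (hη.1 x (hW hx)), fun F hF hne => ?_⟩
  obtain ⟨t, ht, hdeg⟩ := hsurplus hF hne
  exact ⟨t, ht, le_tsub_of_add_le_right hdeg⟩

theorem WiredMinimal.U1lim_eq (hmin : G.WiredMinimal W η) (hη : G.Recurrent η)
    (hsymm : ∀ x y, G.b x y = G.b y x) (hW : W ⊆ G.VSet) : G.U1lim η W = W := by
  by_contra hne
  set D := G.U1lim η W \ W
  have hDne : D.Nonempty :=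
    Finset.sdiff_nonempty.2 fun hsub => hne (hsub.antisymm (subset_U1lim hW))
  have hDsub : D ⊆ G.U1lim η D :=
    subset_U1lim (Finset.sdiff_subset.trans (G.U1lim_subset_VSet η W))
  obtain ⟨x, hx, hample⟩ := hη.2 _ (G.U1lim_subset_VSet η D) (hDne.mono hDsub)
  have hxD : x ∈ D := by_contra fun hxD => hample.not_gt (lt_degIn_U1lim hx hxD)
  obtain ⟨hxU, hxW⟩ := Finset.mem_sdiff.1 hxD
  obtain ⟨w, hwU, hw, hxw⟩ :=
    G.exists_b_pos_of_degIn_lt (hample.trans_lt (lt_degIn_U1lim hxU hxW))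
  have hwW : w ∈ W :=
    by_contra fun hwW => hw (hDsub (Finset.mem_sdiff.2 ⟨hwU, hwW⟩))
  exact hη.not_wiredMinimal hW hwW hw hxW hx (hsymm x w ▸ hxw) hmin

end Sandpile.Graph

/-- Lemma `burn_alone`. If `ξ` is minimal on `W`, then every
recurrent `η` with `η_W = ξ` lies in `E_{V,W}`: phase one of the burning based on `W`
burns all of `V \ W`, i.e. the final phase-one unburnt set is exactly `W`. -/
theorem statement_5 {α : Type*} [Fintype α] [DecidableEq α] (G : Sandpile.Graph α)
    (hG : G.IsSandpileGraph) (W : Finset α) (hWne : W.Nonempty) (hWs : G.sink ∉ W)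
    (hconn : G.ConnectedOn {x : α | x ∉ W}) (ξ : α → ℕ)
    (hstable : ∀ x ∈ W, ξ x < G.deg x) (hmin : G.Minimal W ξ) :
    ∀ η : α → ℕ, G.Recurrent η → Graph.EqOn η ξ W → G.U1lim η W = W := by
  intro η hη hηξ
  exact ((hmin.congr hηξ).wiredMinimal hWs hconn).U1lim_eq hη hG.1
    (Graph.subset_VSet_iff.2 hWs)
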